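/- arXiv:1002.2762 — 2 statements merged into one kernel-verified Lean document; each statement's English description precedes it below -/
import Mathlib

section
/- In U the commutator identity Av₁² − v₁²A = (q⁻² + 1)v₂v₁ holds. -/
noncomputable section

abbrev F : Type := RatFunc ℚ

/-- The deformation parameter `q`. -/
def qq : F := RatFunc.X

/-- The quantum integer `[3] = q² + 1 + q⁻²`. -/
def box3 : F := qq ^ 2 + 1 + (qq⁻¹) ^ 2

/-- The generators `E₁, E₂` of the free algebra. -/
def gen (i : Fin 2) : FreeAlgebra F (Fin 2) := FreeAlgebra.ι F i

/-- The quantized Serre relations. -/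
inductive SerreRel : FreeAlgebra F (Fin 2) → FreeAlgebra F (Fin 2) → Prop
  | rel1 : SerreRel
      (gen 0 ^ 3 * gen 1 - box3 • (gen 0 ^ 2 * gen 1 * gen 0)
        + box3 • (gen 0 * gen 1 * gen 0 ^ 2) - gen 1 * gen 0 ^ 3) 0
  | rel2 : SerreRel
      (gen 1 ^ 3 * gen 0 - box3 • (gen 1 ^ 2 * gen 0 * gen 1)
        + box3 • (gen 1 * gen 0 * gen 1 ^ 2) - gen 0 * gen 1 ^ 3) 0

/-- `U = U_q(𝔫)`, the free algebra on `E₁, E₂` modulo the quantized Serre relations. -/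
abbrev U : Type := RingQuot SerreRel

def E1 : U := RingQuot.mkAlgHom F SerreRel (gen 0)
def E2 : U := RingQuot.mkAlgHom F SerreRel (gen 1)

/-- `A = (1/(q+q⁻¹))(E₂E₁ − q⁻²E₁E₂)`. -/
def Aelt : U := (qq + qq⁻¹)⁻¹ • (E2 * E1 - (qq⁻¹) ^ 2 • (E1 * E2))

def v0 : U := E1
def v1 : U := Aelt * v0 - v0 * Aelt
def v2 : U := Aelt * v1 - v1 * Aelt
def v3 : U := Aelt * v2 - v2 * Aelt

/-- `uᵢ = (1 − q⁻²)⁻²ⁱ vᵢ`. -/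
def u0 : U := v0
def u1 : U := ((1 - (qq⁻¹) ^ 2)⁻¹) ^ 2 • v1
def u2 : U := ((1 - (qq⁻¹) ^ 2)⁻¹) ^ 4 • v2
def u3 : U := ((1 - (qq⁻¹) ^ 2)⁻¹) ^ 6 • v3

/-- `p₁ = u₃u₁ − q²u₂²`. -/
def p1 : U := u3 * u1 - qq ^ 2 • u2 ^ 2
/-- `p₀ = u₂u₀ − q²u₁²`. -/
def p0 : U := u2 * u0 - qq ^ 2 • u1 ^ 2

/-!
Put `t = q⁻²`, `x = E₁`, `y = E₂` and `[a, b]_t = ab - t ba`, and let `D` be the commutator with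
`B = [y, x]_t`, a multiple of `A`. Since `D` is a derivation, `D(v²) = D(v) v + v D(v)`, so it
suffices that `x₁ = D x` and `x₂ = D² x` satisfy `[x₁, x₂]_t = 0`.

The Serre relations say `[x, x₁]_t = 0` and `[y₁, y]_t = 0` for `y₁ = -D y`. A `t`-analogue of the
Jacobi identity converts them into formulas for the commutators of `C = [y, x₁]_t = [y₁, x]_t`
with `x` and `y`. From these, `t [C, B] = (1 + t²) [B, C]`, hence `C` commutes with `B`. Comparing
the images of `[x, x₁]_t = 0` under `D²` and under the commutator with `t C` then gives
`(1 + t²) [x₁, x₂]_t = 0`.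
-/

section QBracket

attribute [local instance] LieRing.ofAssociativeRing

variable {K R : Type*} [CommRing K] [Ring R] [Algebra K R]

/-- The `t`-commutator `[a, b]_t = ab - t ba`. -/
def qBracket (t : K) (a b : R) : R := a * b - t • (b * a)

/-- The quantized Serre polynomial of `x` and `y`, written in terms of `t = q⁻²` and multiplied
by `t`, so that its coefficients are polynomials in `t`. -/
def qSerre (t : K) (x y : R) : R :=
  t • (x ^ 3 * y) - (1 + t + t ^ 2) • (x ^ 2 * y * x) + (1 + t + t ^ 2) • (x * y * x ^ 2)
    - t • (y * x ^ 3)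

theorem qBracket_zero_left (t : K) (a : R) : qBracket t 0 a = 0 := by simp [qBracket]

theorem qBracket_zero_right (t : K) (a : R) : qBracket t a 0 = 0 := by simp [qBracket]

theorem qBracket_neg_left (t : K) (a b : R) : qBracket t (-a) b = -qBracket t a b := by
  simp only [qBracket, neg_mul, mul_neg, smul_neg, neg_sub', sub_neg_eq_add]

theorem qBracket_smul_left (t c : K) (a b : R) : qBracket t (c • a) b = c • qBracket t a b := by
  simp only [qBracket, smul_sub, smul_mul_assoc, mul_smul_comm, smul_comm t c]

theorem qBracket_smul_right (t c : K) (a b : R) : qBracket t a (c • b) = c • qBracket t a b := by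
  simp only [qBracket, smul_sub, smul_mul_assoc, mul_smul_comm, smul_comm t c]

theorem lie_qBracket (t : K) (d a b : R) :
    ⁅d, qBracket t a b⁆ = qBracket t ⁅d, a⁆ b + qBracket t a ⁅d, b⁆ := by
  simp only [qBracket, Ring.lie_def, mul_sub, sub_mul, smul_sub, smul_mul_assoc, mul_smul_comm,
    mul_assoc]
  abel

theorem smul_lie_qBracket (s t : K) (d a b : R) :
    s • ⁅d, qBracket t a b⁆ = qBracket t (s • ⁅d, a⁆) b + qBracket t a (s • ⁅d, b⁆) := by
  rw [lie_qBracket, qBracket_smul_left, qBracket_smul_right, smul_add]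

theorem qBracket_qBracket_right (t : K) (a b c : R) :
    qBracket (t ^ 2) a (qBracket t b c) =
      qBracket (t ^ 2) (qBracket t a b) c - t • ⁅qBracket t a c, b⁆ := by
  simp only [qBracket, Ring.lie_def, mul_sub, sub_mul, smul_sub, smul_mul_assoc, mul_smul_comm,
    mul_assoc]
  module

theorem qBracket_qBracket_left (t : K) (a b c : R) :
    qBracket (t ^ 2) (qBracket t a b) c =
      qBracket (t ^ 2) a (qBracket t b c) - t • ⁅b, qBracket t a c⁆ := by
  simp only [qBracket, Ring.lie_def, mul_sub, sub_mul, smul_sub, smul_mul_assoc, mul_smul_comm,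
    mul_assoc]
  module

theorem qBracket_lie_qBracket_eq_qSerre (t : K) (x y : R) :
    qBracket t x ⁅qBracket t y x, x⁆ = qSerre t x y := by
  simp only [qBracket, qSerre, Ring.lie_def, pow_succ, pow_zero, one_mul, mul_sub, sub_mul,
    smul_sub, smul_mul_assoc, mul_smul_comm, mul_assoc]
  module

theorem qBracket_lie_qBracket_eq_neg_qSerre (t : K) (x y : R) :
    qBracket t ⁅y, qBracket t y x⁆ y = -qSerre t y x := by
  simp only [qBracket, qSerre, Ring.lie_def, pow_succ, pow_zero, one_mul, mul_sub, sub_mul,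
    smul_sub, smul_mul_assoc, mul_smul_comm, mul_assoc]
  module

theorem qBracket_lie_qBracket_comm (t : K) (x y : R) :
    qBracket t ⁅y, qBracket t y x⁆ x = qBracket t y ⁅qBracket t y x, x⁆ := by
  simp only [qBracket, Ring.lie_def, mul_sub, sub_mul, smul_sub, smul_mul_assoc, mul_smul_comm,
    mul_assoc]
  abel

theorem smul_qBracket_lie_of_qBracket_eq_zero {t : K} {b c : R} (h : qBracket t b c = 0) (a : R) :
    t • ⁅qBracket t a c, b⁆ = qBracket (t ^ 2) (qBracket t a b) c := by
  have jacobi := qBracket_qBracket_right t a b c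
  rw [h, qBracket_zero_right] at jacobi
  exact (sub_eq_zero.mp jacobi.symm).symm

theorem smul_lie_qBracket_of_qBracket_eq_zero {t : K} {a b : R} (h : qBracket t a b = 0) (c : R) :
    t • ⁅b, qBracket t a c⁆ = qBracket (t ^ 2) a (qBracket t b c) := by
  have jacobi := qBracket_qBracket_left t a b c
  rw [h, qBracket_zero_left] at jacobi
  exact (sub_eq_zero.mp jacobi.symm).symm

theorem qBracket_qBracket_lie_sub {t : K} {x y b : R}
    (h : qBracket t ⁅y, b⁆ x = qBracket t y ⁅b, x⁆) :
    qBracket t y (qBracket (t ^ 2) b ⁅b, x⁆) - qBracket t (qBracket (t ^ 2) ⁅y, b⁆ b) x =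
      (1 + t ^ 2) • ⁅b, qBracket t y ⁅b, x⁆⁆ := by
  calc
    _ = b * qBracket t y ⁅b, x⁆ - qBracket t ⁅y, b⁆ x * b
          + t ^ 2 • (b * qBracket t ⁅y, b⁆ x - qBracket t y ⁅b, x⁆ * b) := by
      simp only [qBracket, Ring.lie_def, mul_sub, sub_mul, smul_sub, smul_mul_assoc, mul_smul_comm,
        mul_assoc]
      module
    _ = _ := by
      rw [h, Ring.lie_def b (qBracket t y _), add_smul, one_smul]

theorem smul_lie_qBracket_lie_eq_zero {t : K} {x y : R} (hx : qSerre t x y = 0)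
    (hy : qSerre t y x = 0) :
    (1 + t + t ^ 2) • ⁅qBracket t y x, qBracket t y ⁅qBracket t y x, x⁆⁆ = 0 := by
  rw [← qBracket_lie_qBracket_eq_qSerre] at hx
  rw [← neg_eq_zero, ← qBracket_lie_qBracket_eq_neg_qSerre] at hy
  have comm := qBracket_lie_qBracket_comm t x y
  have lie_x := smul_qBracket_lie_of_qBracket_eq_zero hx y
  have lie_y := smul_lie_qBracket_of_qBracket_eq_zero hy x
  have twisted := qBracket_qBracket_lie_sub comm
  rw [comm] at lie_y
  set b := qBracket t y x with hb
  set c := qBracket t y ⁅b, x⁆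
  have lie_b : t • ⁅c, b⁆ = (1 + t ^ 2) • ⁅b, c⁆ := by
    rw [hb, smul_lie_qBracket, ← hb, lie_x, ← lie_skew c y, smul_neg, lie_y, qBracket_neg_left,
      ← twisted, neg_add_eq_sub]
  calc
    (1 + t + t ^ 2) • ⁅b, c⁆ = (1 + t ^ 2) • ⁅b, c⁆ - t • ⁅c, b⁆ := by
      rw [← lie_skew c b]
      module
    _ = 0 := by rw [lie_b, sub_self]

theorem qBracket_qBracket_eq_lie_left (s t : K) (b u v : R) :
    qBracket t (qBracket s b u) v =
      qBracket t ⁅b, u⁆ v + (1 - s) • (qBracket t u v * b + u * ⁅b, v⁆) := by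
  simp only [qBracket, Ring.lie_def, mul_sub, sub_mul, smul_sub, smul_mul_assoc, mul_smul_comm,
    mul_assoc]
  module

theorem qBracket_qBracket_eq_lie_right (s t : K) (b u v : R) :
    qBracket t u (qBracket s b v) =
      qBracket t u ⁅b, v⁆ + (1 - s) • (qBracket t u v * b - t • (v * ⁅b, u⁆)) := by
  simp only [qBracket, Ring.lie_def, mul_sub, sub_mul, smul_sub, smul_mul_assoc, mul_smul_comm,
    mul_assoc]
  module

theorem smul_qBracket_lie_lie_eq_zero {t : K} {x b c : R} (hx : qBracket t x ⁅b, x⁆ = 0)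
    (hbc : ⁅b, c⁆ = 0) (hcx : t • ⁅c, x⁆ = qBracket (t ^ 2) b ⁅b, x⁆) :
    (1 + t ^ 2) • qBracket t ⁅b, x⁆ ⁅b, ⁅b, x⁆⁆ = 0 := by
  have hcx₁ : t • ⁅c, ⁅b, x⁆⁆ = qBracket (t ^ 2) b ⁅b, ⁅b, x⁆⁆ := by
    rw [leibniz_lie, ← lie_skew c b, hbc, neg_zero, zero_lie, zero_add, ← lie_smul t b, hcx,
      lie_qBracket, lie_self, qBracket_zero_left, zero_add]
  set x₁ := ⁅b, x⁆
  set x₂ := ⁅b, x₁⁆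
  have lie_b : qBracket t x₁ x₁ + qBracket t x x₂ = 0 := by
    rw [← lie_qBracket, hx, lie_zero]
  have lie_b_b :
      (qBracket t x₂ x₁ + qBracket t x₁ x₂) + (qBracket t x₁ x₂ + qBracket t x ⁅b, x₂⁆) = 0 := by
    rw [← lie_qBracket, ← lie_qBracket t b x x₂, ← lie_add, lie_b, lie_zero]
  have lie_c :
      qBracket t x₂ x₁ + qBracket t x ⁅b, x₂⁆ + (1 - t ^ 2) • qBracket t x₁ x₂ = 0 := by
    calc
      _ = qBracket t (qBracket (t ^ 2) b x₁) x₁ + qBracket t x (qBracket (t ^ 2) b x₂)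
            - (1 - t ^ 2) • ((qBracket t x₁ x₁ + qBracket t x x₂) * b) := by
        rw [qBracket_qBracket_eq_lie_left, qBracket_qBracket_eq_lie_right,
          show qBracket t x₁ x₂ = x₁ * x₂ - t • (x₂ * x₁) from rfl, add_mul]
        module
      _ = 0 := by
        rw [lie_b, ← hcx, ← hcx₁, ← smul_lie_qBracket, hx, lie_zero, smul_zero, zero_mul, smul_zero,
          sub_zero]
  linear_combination (norm := module) lie_b_b - lie_c

theorem qBracket_lie_lie_eq_zero {t : K} {x y : R} (hx : qSerre t x y = 0) (hy : qSerre t y x = 0)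
    (ht₃ : IsSMulRegular R (1 + t + t ^ 2)) (ht₂ : IsSMulRegular R (1 + t ^ 2)) :
    qBracket t ⁅qBracket t y x, x⁆ ⁅qBracket t y x, ⁅qBracket t y x, x⁆⁆ = 0 := by
  have comm := ht₃.right_eq_zero_of_smul (smul_lie_qBracket_lie_eq_zero hx hy)
  rw [← qBracket_lie_qBracket_eq_qSerre] at hx
  exact ht₂.right_eq_zero_of_smul <| smul_qBracket_lie_lie_eq_zero hx comm
    (smul_qBracket_lie_of_qBracket_eq_zero hx y)

theorem lie_sq (a v : R) : ⁅a, v ^ 2⁆ = ⁅a, v⁆ * v + v * ⁅a, v⁆ := by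
  simp only [Ring.lie_def]
  noncomm_ring

theorem stmt3_general {t : K} {x y : R} (hx : qSerre t x y = 0) (hy : qSerre t y x = 0)
    (ht₃ : IsSMulRegular R (1 + t + t ^ 2)) (ht₂ : IsSMulRegular R (1 + t ^ 2)) (c : K) {a : R}
    (ha : a = c • qBracket t y x) :
    ⁅a, ⁅a, x⁆ ^ 2⁆ = (t + 1) • (⁅a, ⁅a, x⁆⁆ * ⁅a, x⁆) := by
  have comm : qBracket t ⁅a, x⁆ ⁅a, ⁅a, x⁆⁆ = 0 := by
    simp only [ha, smul_lie, lie_smul, qBracket_smul_left, qBracket_smul_right,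
      qBracket_lie_lie_eq_zero hx hy ht₃ ht₂, smul_zero]
  rw [lie_sq, sub_eq_zero.mp comm, add_smul, one_smul, add_comm]

end QBracket

theorem transcendental_X_inv_sq (k : Type*) [Field k] :
    Transcendental k ((RatFunc.X : RatFunc k)⁻¹ ^ 2) :=
  Transcendental.pow (fun h => RatFunc.transcendental_X (IsAlgebraic.inv_iff.mp h)) two_pos

theorem aeval_X_inv_sq_ne_zero {k : Type*} [Field k] {p : Polynomial k} (hp : p ≠ 0) :
    Polynomial.aeval ((RatFunc.X : RatFunc k)⁻¹ ^ 2) p ≠ 0 :=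
  fun h => hp (transcendental_iff.mp (transcendental_X_inv_sq k) p h)

theorem one_add_qq_inv_sq_add_sq_ne_zero : 1 + qq⁻¹ ^ 2 + (qq⁻¹ ^ 2) ^ 2 ≠ 0 := by
  have hp : (1 + .X + .X ^ 2 : Polynomial ℚ) ≠ 0 := Polynomial.Monic.ne_zero (by monicity!)
  simpa [qq] using aeval_X_inv_sq_ne_zero hp

theorem one_add_qq_inv_sq_sq_ne_zero : 1 + (qq⁻¹ ^ 2) ^ 2 ≠ 0 := by
  have hp : (1 + .X ^ 2 : Polynomial ℚ) ≠ 0 := Polynomial.Monic.ne_zero (by monicity!)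
  simpa [qq] using aeval_X_inv_sq_ne_zero hp

theorem qSerre_qq_inv_sq {R : Type*} [Ring R] [Algebra F R] (x y : R) :
    qSerre (qq⁻¹ ^ 2) x y = qq⁻¹ ^ 2 • (x ^ 3 * y - box3 • (x ^ 2 * y * x)
      + box3 • (x * y * x ^ 2) - y * x ^ 3) := by
  have hq : qq ≠ 0 := RatFunc.X_ne_zero
  have hbox : qq⁻¹ ^ 2 * box3 = 1 + qq⁻¹ ^ 2 + (qq⁻¹ ^ 2) ^ 2 := by
    unfold box3
    field_simp
  simp only [qSerre, smul_sub, smul_add, smul_smul, hbox]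

theorem qSerre_E1_E2 : qSerre (qq⁻¹ ^ 2) E1 E2 = 0 := by
  rw [qSerre_qq_inv_sq, smul_eq_zero_of_right]
  simpa [E1, E2] using RingQuot.mkAlgHom_rel F SerreRel.rel1

theorem qSerre_E2_E1 : qSerre (qq⁻¹ ^ 2) E2 E1 = 0 := by
  rw [qSerre_qq_inv_sq, smul_eq_zero_of_right]
  simpa [E1, E2] using RingQuot.mkAlgHom_rel F SerreRel.rel2

/-- In `U` the commutator identity `Av₁² − v₁²A = (q⁻² + 1)v₂v₁` holds. -/
theorem stmt3 :
    Aelt * v1 ^ 2 - v1 ^ 2 * Aelt = (qq ^ (-2 : ℤ) + 1) • (v2 * v1) := by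
  rw [zpow_neg, zpow_ofNat, ← inv_pow]
  exact stmt3_general qSerre_E1_E2 qSerre_E2_E1 (.of_ne_zero one_add_qq_inv_sq_add_sq_ne_zero)
    (.of_ne_zero one_add_qq_inv_sq_sq_ne_zero) (qq + qq⁻¹)⁻¹ rfl
end
end

section
/- In U the elements p₀ and p₁ q-commute with each other and with each of the generators u₀, u₁, u₂, u₃; more precisely: p₀p₁ = q⁻⁴p₁p₀, p₀u₀ = q²u₀p₀, p₀u₁ = u₁p₀, p₀u₂ = q⁻²u₂p₀, p₀u₃ = q⁻⁴u₃p₀, p₁u₀ = q⁴u₀p₁, p₁u₁ = q²u₁p₁, p₁u₂ = u₂p₁, and p₁u₃ = q⁻²u₃p₁. -/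
noncomputable section

/-!
Write `Q = q²`, `x = E₁`, `y = E₂`, let `δ = yx - Q⁻¹xy`, a multiple of `A`, and put
`δ₂ = y⁅δ, x⁆ - Q⁻¹⁅δ, x⁆y`. The two Serre relations say that `⁅δ, x⁆x = Qx⁅δ, x⁆` and
`y⁅y, δ⁆ = Q⁅y, δ⁆y`. They determine the commutators of `δ₂` with `x` and `y`, and these imply
`(Q + 1 + Q⁻¹)⁅δ₂, δ⁆ = 0`. Hence a combination `C` of `δ₂` and `δ²` commutes with `δ` and satisfies
`ad C x = (ad δ)² x`.

The `uᵢ` are iterated commutators of `x` with a multiple `B` of `δ`, so, after rescaling `C`, the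
derivations `ad B` and `ad C` shift the index by one and by two. Applying `(ad B)² - ad C` to
`u₁u₀ = Qu₀u₁` gives `2u₂u₁ = 2Qu₁u₂`, and inductively `uₙ₊₁uₙ = Quₙuₙ₊₁` for all `n`; applying
`ad B` to these gives the relations at distances two and three. By the relation at distance two,
`pₙ = uₙ₊₂uₙ - Quₙ₊₁² = Quₙuₙ₊₂ - uₙ₊₁²`, and moving a `uₘ` past `pₙ` turns one form into the other.
-/

attribute [local instance 100] LieRing.ofAssociativeRing

section Commutator

variable {K R : Type*} [CommRing K] [Ring R] [Algebra K R]

lemma commutator_mul (b x y : R) : ⁅b, x * y⁆ = ⁅b, x⁆ * y + x * ⁅b, y⁆ := by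
  simp only [Ring.lie_def]
  noncomm_ring

-- `lie_smul` itself is not found by `rw` and `simp` here: its instances only unify after unfolding.
lemma commutator_smul (r : K) (b x : R) : ⁅b, r • x⁆ = r • ⁅b, x⁆ :=
  lie_smul r b x

lemma commutator_left_comm_of_commute {b c : R} (h : Commute c b) (x : R) :
    ⁅c, ⁅b, x⁆⁆ = ⁅b, ⁅c, x⁆⁆ := by
  rw [leibniz_lie, h.lie_eq, zero_lie, zero_add]

/-- The `q`-commutator of `a` and `b` with parameter `r`, in terms of which the root vectors are
defined. -/
def qCommutator (r : K) (a b : R) : R := a * b - r • (b * a)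

lemma commutator_qCommutator_leibniz (r : K) (z a b : R) :
    ⁅z, qCommutator r a b⁆ = qCommutator r ⁅z, a⁆ b + qCommutator r a ⁅z, b⁆ := by
  simp only [qCommutator, Ring.lie_def, mul_sub, sub_mul, smul_sub, mul_smul_comm, smul_mul_assoc,
    mul_assoc]
  module

lemma qCommutator_sub_right (r : K) (y a b : R) :
    qCommutator r y (a - b) = qCommutator r y a - qCommutator r y b := by
  simp only [qCommutator, mul_sub, sub_mul, smul_sub]
  abel

lemma qCommutator_sub_left (r : K) (a b x : R) :
    qCommutator r (a - b) x = qCommutator r a x - qCommutator r b x := by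
  simp only [qCommutator, mul_sub, sub_mul, smul_sub]
  abel

lemma qCommutator_smul_right (r s : K) (y a : R) :
    qCommutator r y (s • a) = s • qCommutator r y a := by
  rw [qCommutator, mul_smul_comm, smul_mul_assoc, smul_comm, ← smul_sub, ← qCommutator]

lemma qCommutator_smul_left (r s : K) (a x : R) :
    qCommutator r (s • a) x = s • qCommutator r a x := by
  rw [qCommutator, mul_smul_comm, smul_mul_assoc, smul_comm, ← smul_sub, ← qCommutator]

lemma qCommutator_commutator_swap (r : K) (a b x : R) :
    qCommutator r ⁅a, b⁆ x = -qCommutator r ⁅b, a⁆ x := by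
  rw [← lie_skew, qCommutator, neg_mul, mul_neg, smul_neg, ← neg_sub', ← qCommutator]

lemma qCommutator_mul_right (r : K) (y a b : R) :
    qCommutator r y (a * b) = ⁅y, a⁆ * b + a * qCommutator r y b := by
  simp only [qCommutator, Ring.lie_def, mul_sub, sub_mul, mul_smul_comm, mul_assoc]
  abel

lemma qCommutator_mul_right' (r : K) (y a b : R) :
    qCommutator r y (a * b) = qCommutator r y a * b + r • (a * ⁅y, b⁆) := by
  simp only [qCommutator, Ring.lie_def, mul_sub, sub_mul, smul_sub, smul_mul_assoc, mul_assoc]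
  abel

lemma qCommutator_mul_left (r : K) (a b x : R) :
    qCommutator r (a * b) x = a * ⁅b, x⁆ + qCommutator r a x * b := by
  simp only [qCommutator, Ring.lie_def, mul_sub, sub_mul, smul_mul_assoc, mul_assoc]
  abel

lemma qCommutator_mul_left' (r : K) (a b x : R) :
    qCommutator r (a * b) x = a * qCommutator r b x + r • (⁅a, x⁆ * b) := by
  simp only [qCommutator, Ring.lie_def, mul_sub, sub_mul, smul_sub, mul_smul_comm, mul_assoc]
  abel

end Commutator

section HankelMinors

variable {K R : Type*} [CommRing K] [Ring R] [Algebra K R]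

/-- The straightening relations satisfied by the `uᵢ`: a product of two terms at distance at most
three can be rewritten with the smaller index on the left. -/
structure IsQuadraticSeq (Q : K) (u : ℕ → R) : Prop where
  term_add_one_mul_term (n : ℕ) : u (n + 1) * u n = Q • (u n * u (n + 1))
  term_add_two_mul_term (n : ℕ) :
    u (n + 2) * u n = Q • (u n * u (n + 2)) + (Q - 1) • u (n + 1) ^ 2
  term_add_three_mul_term (n : ℕ) :
    u (n + 3) * u n = Q • (u n * u (n + 3)) + (Q ^ 2 - 1) • (u (n + 1) * u (n + 2))

/-- The `2 × 2` quantum Hankel minor `u (n + 2) u n - Q u (n + 1) ^ 2`; with `Q = q²` the first two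
are the paper's `p₀` and `p₁`. -/
def hankelMinor (Q : K) (u : ℕ → R) (n : ℕ) : R := u (n + 2) * u n - Q • u (n + 1) ^ 2

namespace IsQuadraticSeq

variable {Q : K} {u : ℕ → R}

lemma hankelMinor_eq (hu : IsQuadraticSeq Q u) (n : ℕ) :
    hankelMinor Q u n = Q • (u n * u (n + 2)) - u (n + 1) ^ 2 := by
  rw [hankelMinor, hu.term_add_two_mul_term]
  module

lemma term_add_one_sq_mul_term (hu : IsQuadraticSeq Q u) (n : ℕ) :
    u (n + 1) ^ 2 * u n = Q ^ 2 • (u n * u (n + 1) ^ 2) := by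
  rw [pow_two, mul_assoc, hu.term_add_one_mul_term, mul_smul_comm, ← mul_assoc,
    hu.term_add_one_mul_term, smul_mul_assoc, smul_smul, mul_assoc, pow_two]

lemma term_add_one_mul_term_sq (hu : IsQuadraticSeq Q u) (n : ℕ) :
    u (n + 1) * u n ^ 2 = Q ^ 2 • (u n ^ 2 * u (n + 1)) := by
  rw [pow_two, ← mul_assoc, hu.term_add_one_mul_term, smul_mul_assoc, mul_assoc,
    hu.term_add_one_mul_term, mul_smul_comm, smul_smul, mul_assoc, pow_two]

lemma hankelMinor_mul_term (hu : IsQuadraticSeq Q u) (n : ℕ) :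
    hankelMinor Q u n * u n = Q • (u n * hankelMinor Q u n) := by
  calc hankelMinor Q u n * u n
    _ = Q • (u n * (u (n + 2) * u n)) - u (n + 1) ^ 2 * u n := by
      rw [hu.hankelMinor_eq, sub_mul, smul_mul_assoc, mul_assoc]
    _ = Q • (u n * hankelMinor Q u n) := by
      rw [hu.term_add_one_sq_mul_term, hankelMinor, mul_sub, mul_smul_comm]
      module

lemma hankelMinor_mul_term_add_one (hu : IsQuadraticSeq Q u) (n : ℕ) :
    hankelMinor Q u n * u (n + 1) = u (n + 1) * hankelMinor Q u n := by
  have middle : Q • (u n * u (n + 2) * u (n + 1)) = Q • (u (n + 1) * (u n * u (n + 2))) := by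
    rw [mul_assoc, hu.term_add_one_mul_term (n + 1), ← mul_assoc, hu.term_add_one_mul_term,
      mul_smul_comm, smul_mul_assoc, mul_assoc]
  rw [hu.hankelMinor_eq, sub_mul, mul_sub, smul_mul_assoc, mul_smul_comm, middle, pow_mul_comm']

lemma term_add_two_mul_hankelMinor (hu : IsQuadraticSeq Q u) (n : ℕ) :
    u (n + 2) * hankelMinor Q u n = Q • (hankelMinor Q u n * u (n + 2)) := by
  calc u (n + 2) * hankelMinor Q u n
    _ = Q • (u (n + 2) * u n * u (n + 2)) - u (n + 2) * u (n + 1) ^ 2 := by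
      rw [hu.hankelMinor_eq, mul_sub, mul_smul_comm, mul_assoc]
    _ = Q • (hankelMinor Q u n * u (n + 2)) := by
      rw [hu.term_add_one_mul_term_sq (n + 1), hankelMinor, sub_mul, smul_mul_assoc]
      module

lemma term_add_three_mul_hankelMinor (hu : IsQuadraticSeq Q u) (n : ℕ) :
    u (n + 3) * hankelMinor Q u n = Q ^ 2 • (hankelMinor Q u n * u (n + 3)) := by
  have outer : u (n + 3) * (u n * u (n + 2)) =
      Q ^ 2 • (u n * u (n + 2) * u (n + 3)) + (Q ^ 2 - 1) • (u (n + 1) * u (n + 2) ^ 2) := by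
    rw [← mul_assoc, hu.term_add_three_mul_term, add_mul, smul_mul_assoc, smul_mul_assoc, mul_assoc,
      hu.term_add_one_mul_term (n + 2), mul_smul_comm, ← mul_assoc, mul_assoc (u (n + 1)),
      ← pow_two]
    module
  have inner : u (n + 3) * u (n + 1) ^ 2 =
      Q ^ 2 • (u (n + 1) ^ 2 * u (n + 3)) + (Q ^ 3 - Q) • (u (n + 1) * u (n + 2) ^ 2) := by
    rw [pow_two (u (n + 1)), ← mul_assoc, hu.term_add_two_mul_term (n + 1), add_mul, smul_mul_assoc,
      smul_mul_assoc, mul_assoc, hu.term_add_two_mul_term (n + 1),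
      hu.term_add_one_sq_mul_term (n + 1), mul_add, mul_smul_comm, mul_smul_comm, mul_assoc]
    module
  rw [hu.hankelMinor_eq, mul_sub, sub_mul, mul_smul_comm, smul_mul_assoc, outer, inner]
  module

lemma hankelMinor_succ_mul_term (hu : IsQuadraticSeq Q u) (n : ℕ) :
    hankelMinor Q u (n + 1) * u n = Q ^ 2 • (u n * hankelMinor Q u (n + 1)) := by
  have outer : u (n + 1) * u (n + 3) * u n =
      Q ^ 2 • (u n * (u (n + 1) * u (n + 3))) + (Q ^ 2 - 1) • (u (n + 1) ^ 2 * u (n + 2)) := by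
    rw [mul_assoc, hu.term_add_three_mul_term, mul_add, mul_smul_comm, mul_smul_comm, ← mul_assoc,
      hu.term_add_one_mul_term, smul_mul_assoc, mul_assoc, ← mul_assoc (u (n + 1)), ← pow_two]
    module
  have inner : u (n + 2) ^ 2 * u n =
      Q ^ 2 • (u n * u (n + 2) ^ 2) + (Q ^ 3 - Q) • (u (n + 1) ^ 2 * u (n + 2)) := by
    rw [pow_two (u (n + 2)), mul_assoc, hu.term_add_two_mul_term, mul_add, mul_smul_comm,
      mul_smul_comm, ← mul_assoc, hu.term_add_two_mul_term, hu.term_add_one_mul_term_sq (n + 1),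
      add_mul, smul_mul_assoc, smul_mul_assoc, mul_assoc]
    module
  rw [hu.hankelMinor_eq, sub_mul, mul_sub, smul_mul_assoc, mul_smul_comm, outer, inner]
  module

lemma hankelMinor_succ_mul_hankelMinor (hu : IsQuadraticSeq Q u) (n : ℕ) :
    hankelMinor Q u (n + 1) * hankelMinor Q u n =
      Q ^ 2 • (hankelMinor Q u n * hankelMinor Q u (n + 1)) := by
  set p := hankelMinor Q u n
  have outer : u (n + 3) * u (n + 1) * p = Q ^ 2 • (p * (u (n + 3) * u (n + 1))) := by
    rw [mul_assoc, ← hu.hankelMinor_mul_term_add_one, ← mul_assoc,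
      hu.term_add_three_mul_hankelMinor, smul_mul_assoc, mul_assoc]
  have inner : u (n + 2) ^ 2 * p = Q ^ 2 • (p * u (n + 2) ^ 2) := by
    rw [pow_two, mul_assoc, hu.term_add_two_mul_hankelMinor, mul_smul_comm, ← mul_assoc,
      hu.term_add_two_mul_hankelMinor, smul_mul_assoc, smul_smul, mul_assoc, pow_two]
  rw [hankelMinor, sub_mul, mul_sub, smul_mul_assoc, mul_smul_comm, outer, inner]
  module

end IsQuadraticSeq

end HankelMinors

section IteratedCommutators

variable {K R : Type*} [CommRing K] [Ring R] [Algebra K R] {Q : K} {u : ℕ → R} {B C : R}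

lemma term_add_two_mul_term_of_commutator (hB : ∀ n, ⁅B, u n⁆ = u (n + 1)) {n : ℕ}
    (h : u (n + 1) * u n = Q • (u n * u (n + 1))) :
    u (n + 2) * u n = Q • (u n * u (n + 2)) + (Q - 1) • u (n + 1) ^ 2 := by
  have ad_B_h := congrArg (⁅B, ·⁆) h
  simp only [commutator_smul, commutator_mul, hB] at ad_B_h
  rw [pow_two]
  linear_combination (norm := module) ad_B_h

lemma term_add_two_mul_term_add_one_of_commutator (two : IsUnit (2 : K))
    (hB : ∀ n, ⁅B, u n⁆ = u (n + 1)) (hC : ∀ n, ⁅C, u n⁆ = u (n + 2)) {n : ℕ}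
    (h : u (n + 1) * u n = Q • (u n * u (n + 1))) :
    u (n + 2) * u (n + 1) = Q • (u (n + 1) * u (n + 2)) := by
  have ad_C_h := congrArg (⁅C, ·⁆) h
  have ad_B_sq_h := congrArg (fun z ↦ ⁅B, ⁅B, z⁆⁆) h
  simp only [commutator_smul, commutator_mul, lie_add, hB, hC] at ad_C_h ad_B_sq_h
  -- The terms involving `u n` and `u (n + 3)` are the same in both identities.
  refine two.smul_left_cancel.1 ?_
  linear_combination (norm := module) ad_B_sq_h - ad_C_h

lemma term_add_three_mul_term_of_commutator (hB : ∀ n, ⁅B, u n⁆ = u (n + 1)) {n : ℕ}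
    (h : u (n + 1) * u n = Q • (u n * u (n + 1)))
    (hsucc : u (n + 2) * u (n + 1) = Q • (u (n + 1) * u (n + 2))) :
    u (n + 3) * u n = Q • (u n * u (n + 3)) + (Q ^ 2 - 1) • (u (n + 1) * u (n + 2)) := by
  have ad_B_two_step := congrArg (⁅B, ·⁆) (term_add_two_mul_term_of_commutator hB h)
  simp only [commutator_smul, commutator_mul, lie_add, pow_two (u _), hB] at ad_B_two_step
  linear_combination (norm := module) ad_B_two_step + (Q - 2) • hsucc

lemma isQuadraticSeq_of_commutator (two : IsUnit (2 : K))
    (hB : ∀ n, ⁅B, u n⁆ = u (n + 1)) (hC : ∀ n, ⁅C, u n⁆ = u (n + 2))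
    (h₀ : u 1 * u 0 = Q • (u 0 * u 1)) : IsQuadraticSeq Q u := by
  have one_step (n : ℕ) : u (n + 1) * u n = Q • (u n * u (n + 1)) := by
    induction n with
    | zero => exact h₀
    | succ n ih => exact term_add_two_mul_term_add_one_of_commutator two hB hC ih
  exact ⟨one_step, fun n ↦ term_add_two_mul_term_of_commutator hB (one_step n),
    fun n ↦ term_add_three_mul_term_of_commutator hB (one_step n) (one_step (n + 1))⟩

/-- The sequence `x, ⁅B, x⁆, ⁅B, ⁅B, x⁆⁆, …` of iterated commutators; for `B = A` and `x = E₁` its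
first terms are the `vᵢ`. -/
def adSeq (B x : R) : ℕ → R
  | 0 => x
  | n + 1 => ⁅B, adSeq B x n⁆

lemma adSeq_smul (t : K) (B x : R) (n : ℕ) : adSeq (t • B) x n = t ^ n • adSeq B x n := by
  induction n with
  | zero => rw [pow_zero, one_smul, adSeq, adSeq]
  | succ n ih => rw [adSeq, adSeq, ih, smul_lie, commutator_smul, smul_smul, pow_succ']

lemma commutator_adSeq {x : R} (hCB : Commute C B) (hC : ⁅C, x⁆ = ⁅B, ⁅B, x⁆⁆) (n : ℕ) :
    ⁅C, adSeq B x n⁆ = adSeq B x (n + 2) := by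
  induction n with
  | zero => exact hC
  | succ n ih => rw [adSeq, commutator_left_comm_of_commute hCB, ih, ← adSeq]

end IteratedCommutators

section SerreRelations

variable {K R : Type*} [Field K] [Ring R] [Algebra K R]

/-- The quantized Serre polynomial of `x` and `y` for the Cartan entry `-2`, written in `Q = q²`. -/
def serrePolynomial (Q : K) (x y : R) : R :=
  x ^ 3 * y - (Q + 1 + Q⁻¹) • (x ^ 2 * y * x) + (Q + 1 + Q⁻¹) • (x * y * x ^ 2) - y * x ^ 3

/-- The root vector of weight `δ = α₁ + α₂` of the affine root system, up to a scalar the paper's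
`A` for `Q = q²`. -/
def deltaVector (Q : K) (x y : R) : R := qCommutator Q⁻¹ y x

/-- The root vector of weight `2δ`; its commuting with `deltaVector` is what makes the iterated
commutators `q`-commute. -/
def twoDeltaVector (Q : K) (x y : R) : R := qCommutator Q⁻¹ y ⁅deltaVector Q x y, x⁆

variable {Q : K} {x y : R}

local notation "δ" => deltaVector Q x y
local notation "δ₂" => twoDeltaVector Q x y

lemma commutator_deltaVector_mul (hQ : Q ≠ 0) (h : serrePolynomial Q x y = 0) :
    ⁅δ, x⁆ * x = Q • (x * ⁅δ, x⁆) := by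
  simp only [serrePolynomial, deltaVector, qCommutator, Ring.lie_def, pow_succ, pow_zero, one_mul,
    mul_sub, sub_mul, mul_smul_comm, smul_mul_assoc, mul_assoc, smul_sub] at h ⊢
  linear_combination (norm := skip) -h
  match_scalars <;> field_simp <;> ring

lemma mul_commutator_deltaVector (hQ : Q ≠ 0) (h : serrePolynomial Q y x = 0) :
    y * ⁅y, δ⁆ = Q • (⁅y, δ⁆ * y) := by
  simp only [serrePolynomial, deltaVector, qCommutator, Ring.lie_def, pow_succ, pow_zero, one_mul,
    mul_sub, sub_mul, mul_smul_comm, smul_mul_assoc, mul_assoc, smul_sub] at h ⊢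
  linear_combination (norm := skip) h
  match_scalars <;> field_simp <;> ring

lemma twoDeltaVector_eq : δ₂ = qCommutator Q⁻¹ ⁅y, δ⁆ x := by
  have leibniz : ⁅δ, δ⁆ = qCommutator Q⁻¹ ⁅δ, y⁆ x + δ₂ := commutator_qCommutator_leibniz Q⁻¹ δ y x
  rw [lie_self, qCommutator_commutator_swap] at leibniz
  exact (neg_add_eq_zero.1 leibniz.symm).symm

lemma qCommutator_commutator_eq (hQ : Q ≠ 0) {a : R} (h : a * x = Q • (x * a)) :
    ⁅qCommutator Q⁻¹ y a, x⁆ = Q • (δ * a) - Q⁻¹ • (a * δ) := by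
  linear_combination (norm := skip) y * h - (Q⁻¹) ^ 2 • (h * y)
  simp only [deltaVector, qCommutator, Ring.lie_def, mul_sub, sub_mul, mul_smul_comm,
    smul_mul_assoc, mul_assoc]
  match_scalars <;> field_simp <;> ring

lemma commutator_qCommutator_eq (hQ : Q ≠ 0) {w : R} (h : y * w = Q • (w * y)) :
    ⁅y, qCommutator Q⁻¹ w x⁆ = Q • (w * δ) - Q⁻¹ • (δ * w) := by
  linear_combination (norm := skip) h * x - (Q⁻¹) ^ 2 • (x * h)
  simp only [deltaVector, qCommutator, Ring.lie_def, mul_sub, sub_mul, mul_smul_comm,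
    smul_mul_assoc, mul_assoc]
  match_scalars <;> field_simp <;> ring

lemma commute_twoDeltaVector_deltaVector (hQ₃ : Q + 1 + Q⁻¹ ≠ 0)
    (hx : ⁅δ₂, x⁆ = Q • (δ * ⁅δ, x⁆) - Q⁻¹ • (⁅δ, x⁆ * δ))
    (hy : ⁅y, δ₂⁆ = Q • (⁅y, δ⁆ * δ) - Q⁻¹ • (δ * ⁅y, δ⁆)) : Commute δ₂ δ := by
  have leibniz : ⁅δ₂, δ⁆ = qCommutator Q⁻¹ ⁅δ₂, y⁆ x + qCommutator Q⁻¹ y ⁅δ₂, x⁆ :=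
    commutator_qCommutator_leibniz Q⁻¹ δ₂ y x
  have left : qCommutator Q⁻¹ y ⁅δ₂, x⁆ = Q • (⁅y, δ⁆ * ⁅δ, x⁆ + δ * δ₂)
      - Q⁻¹ • (δ₂ * δ + Q⁻¹ • (⁅δ, x⁆ * ⁅y, δ⁆)) := by
    rw [hx, qCommutator_sub_right, qCommutator_smul_right, qCommutator_smul_right,
      qCommutator_mul_right, qCommutator_mul_right', ← twoDeltaVector]
  have right : qCommutator Q⁻¹ ⁅y, δ₂⁆ x = Q • (⁅y, δ⁆ * ⁅δ, x⁆ + δ₂ * δ)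
      - Q⁻¹ • (δ * δ₂ + Q⁻¹ • (⁅δ, x⁆ * ⁅y, δ⁆)) := by
    rw [hy, qCommutator_sub_left, qCommutator_smul_left, qCommutator_smul_left,
      qCommutator_mul_left, qCommutator_mul_left', ← twoDeltaVector_eq]
  have key : (Q + 1 + Q⁻¹) • ⁅δ₂, δ⁆ = 0 := by
    rw [qCommutator_commutator_swap, left, right, Ring.lie_def] at leibniz
    rw [Ring.lie_def]
    linear_combination (norm := module) leibniz
  exact sub_eq_zero.1 ((smul_eq_zero.1 key).resolve_left hQ₃)

lemma exists_commute_commutator_eq (hQ : Q ≠ 0) (hQ₂ : Q + Q⁻¹ ≠ 0) (hQ₃ : Q + 1 + Q⁻¹ ≠ 0)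
    (hxy : serrePolynomial Q x y = 0) (hyx : serrePolynomial Q y x = 0) :
    ∃ C, Commute C δ ∧ ⁅C, x⁆ = ⁅δ, ⁅δ, x⁆⁆ := by
  have hx : ⁅δ₂, x⁆ = Q • (δ * ⁅δ, x⁆) - Q⁻¹ • (⁅δ, x⁆ * δ) :=
    qCommutator_commutator_eq hQ (commutator_deltaVector_mul hQ hxy)
  have hy : ⁅y, δ₂⁆ = Q • (⁅y, δ⁆ * δ) - Q⁻¹ • (δ * ⁅y, δ⁆) := by
    rw [twoDeltaVector_eq]
    exact commutator_qCommutator_eq hQ (mul_commutator_deltaVector hQ hyx)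
  have hδ : Commute δ₂ δ := commute_twoDeltaVector_deltaVector hQ₃ hx hy
  -- The multiple of `δ * δ` makes the coefficients of `δ * ⁅δ, x⁆` and `⁅δ, x⁆ * δ` opposite.
  refine ⟨(Q + Q⁻¹)⁻¹ • ((2 : K) • δ₂ - (Q - Q⁻¹) • (δ * δ)), ?_, ?_⟩
  · exact (((hδ.smul_left _).sub_left
      (((Commute.refl δ).mul_left (Commute.refl δ)).smul_left _))).smul_left _
  · have sq : ⁅δ * δ, x⁆ = δ * ⁅δ, x⁆ + ⁅δ, x⁆ * δ := by
      simp only [Ring.lie_def]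
      noncomm_ring
    have expand : ⁅(2 : K) • δ₂ - (Q - Q⁻¹) • (δ * δ), x⁆
        = (Q + Q⁻¹) • ⁅δ, ⁅δ, x⁆⁆ := by
      rw [sub_lie, smul_lie, smul_lie, hx, sq, Ring.lie_def δ ⁅δ, x⁆]
      module
    rw [smul_lie, expand, inv_smul_smul₀ hQ₂]

end SerreRelations

section General

variable {K R : Type*} [Field K] [Ring R] [Algebra K R]

lemma isQuadraticSeq_adSeq {Q : K} {x y : R} (two : (2 : K) ≠ 0) (hQ : Q ≠ 0)
    (hQ₂ : Q + Q⁻¹ ≠ 0) (hQ₃ : Q + 1 + Q⁻¹ ≠ 0)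
    (hxy : serrePolynomial Q x y = 0) (hyx : serrePolynomial Q y x = 0) (t : K) :
    IsQuadraticSeq Q (adSeq (t • deltaVector Q x y) x) := by
  obtain ⟨C, hCδ, hCx⟩ := exists_commute_commutator_eq hQ hQ₂ hQ₃ hxy hyx
  refine isQuadraticSeq_of_commutator (B := t • deltaVector Q x y) (C := t ^ 2 • C) two.isUnit
    (fun n ↦ rfl) (commutator_adSeq ((hCδ.smul_left _).smul_right _) ?_) ?_
  · simp only [smul_lie, commutator_smul, hCx, smul_smul, pow_two]
  · simp only [adSeq, smul_lie, smul_mul_assoc, mul_smul_comm,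
      commutator_deltaVector_mul hQ hxy, smul_comm t Q]

theorem stmt5_general {q : K} {x y : R} (two : (2 : K) ≠ 0) (hq : q ≠ 0)
    (hQ₂ : q ^ 2 + (q ^ 2)⁻¹ ≠ 0) (hQ₃ : q ^ 2 + 1 + (q ^ 2)⁻¹ ≠ 0)
    (hxy : serrePolynomial (q ^ 2) x y = 0) (hyx : serrePolynomial (q ^ 2) y x = 0) (t : K)
    (n : ℕ) :
    let u := adSeq (t • deltaVector (q ^ 2) x y) x
    let p := hankelMinor (q ^ 2) u
    p n * p (n + 1) = q ^ (-4 : ℤ) • (p (n + 1) * p n) ∧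
    p n * u n = q ^ 2 • (u n * p n) ∧
    p n * u (n + 1) = u (n + 1) * p n ∧
    p n * u (n + 2) = q ^ (-2 : ℤ) • (u (n + 2) * p n) ∧
    p n * u (n + 3) = q ^ (-4 : ℤ) • (u (n + 3) * p n) ∧
    p (n + 1) * u n = q ^ 4 • (u n * p (n + 1)) ∧
    p (n + 1) * u (n + 1) = q ^ 2 • (u (n + 1) * p (n + 1)) ∧
    p (n + 1) * u (n + 2) = u (n + 2) * p (n + 1) ∧
    p (n + 1) * u (n + 3) = q ^ (-2 : ℤ) • (u (n + 3) * p (n + 1)) := by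
  intro u p
  have hu : IsQuadraticSeq (q ^ 2) u :=
    isQuadraticSeq_adSeq two (pow_ne_zero 2 hq) hQ₂ hQ₃ hxy hyx t
  have sq_sq : (q ^ 2) ^ 2 = q ^ 4 := by rw [← pow_mul]
  have move_two {a b : R} (h : a = q ^ 2 • b) : b = q ^ (-2 : ℤ) • a := by
    rw [zpow_neg, zpow_ofNat, eq_inv_smul_iff₀ (pow_ne_zero 2 hq), h]
  have move_four {a b : R} (h : a = (q ^ 2) ^ 2 • b) : b = q ^ (-4 : ℤ) • a := by
    rw [zpow_neg, zpow_ofNat, eq_inv_smul_iff₀ (pow_ne_zero 4 hq), h, sq_sq]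
  exact ⟨move_four (hu.hankelMinor_succ_mul_hankelMinor n), hu.hankelMinor_mul_term n,
    hu.hankelMinor_mul_term_add_one n, move_two (hu.term_add_two_mul_hankelMinor n),
    move_four (hu.term_add_three_mul_hankelMinor n), sq_sq ▸ hu.hankelMinor_succ_mul_term n,
    hu.hankelMinor_mul_term (n + 1), hu.hankelMinor_mul_term_add_one (n + 1),
    move_two (hu.term_add_two_mul_hankelMinor (n + 1))⟩

end General

lemma ratFunc_X_pow_ne_one {k : Type*} [Field k] {n : ℕ} (hn : 0 < n) :
    (RatFunc.X : RatFunc k) ^ n ≠ 1 := fun h ↦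
  RatFunc.transcendental_X.pow hn (h ▸ isAlgebraic_one)

lemma qq_ne_zero : qq ≠ 0 := RatFunc.X_ne_zero

lemma qq_sq_add_inv_ne_zero : qq ^ 2 + (qq ^ 2)⁻¹ ≠ 0 := by
  intro h
  have hq := qq_ne_zero
  field_simp at h
  exact ratFunc_X_pow_ne_one (k := ℚ) (n := 8) (by decide) (by
    change qq ^ _ = 1
    linear_combination (qq ^ 4 - 1) * h)

lemma qq_sq_add_one_add_inv_ne_zero : qq ^ 2 + 1 + (qq ^ 2)⁻¹ ≠ 0 := by
  intro h
  have hq := qq_ne_zero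
  field_simp at h
  exact ratFunc_X_pow_ne_one (k := ℚ) (n := 6) (by decide) (by
    change qq ^ _ = 1
    linear_combination (qq ^ 2 - 1) * h)

lemma serrePolynomial_E1_E2 : serrePolynomial (qq ^ 2) E1 E2 = 0 := by
  have h := RingQuot.mkAlgHom_rel F SerreRel.rel1
  simp only [map_add, map_sub, map_smul, map_mul, map_pow, map_zero, box3, inv_pow] at h
  exact h

lemma serrePolynomial_E2_E1 : serrePolynomial (qq ^ 2) E2 E1 = 0 := by
  have h := RingQuot.mkAlgHom_rel F SerreRel.rel2
  simp only [map_add, map_sub, map_smul, map_mul, map_pow, map_zero, box3, inv_pow] at h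
  exact h

/-- The sequence `u₀, u₁, u₂, …`. The normalisations `(1 - q⁻²)⁻²` of the `uᵢ` and `(q + q⁻¹)⁻¹` of
`A` are absorbed into the element whose iterated commutators are taken. -/
def uSeq : ℕ → U :=
  adSeq ((((1 - (qq⁻¹) ^ 2)⁻¹) ^ 2 * (qq + qq⁻¹)⁻¹) • deltaVector (qq ^ 2) E1 E2) E1

lemma uSeq_eq_smul_adSeq (n : ℕ) :
    uSeq n = ((1 - (qq⁻¹) ^ 2)⁻¹) ^ (2 * n) • adSeq Aelt E1 n := by
  have Aelt_eq : Aelt = (qq + qq⁻¹)⁻¹ • deltaVector (qq ^ 2) E1 E2 := by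
    rw [Aelt, inv_pow]; rfl
  rw [uSeq, mul_smul, ← Aelt_eq, pow_mul]
  exact adSeq_smul _ _ _ n

lemma uSeq_zero : uSeq 0 = u0 := rfl

lemma uSeq_one : uSeq 1 = u1 := uSeq_eq_smul_adSeq 1

lemma uSeq_two : uSeq 2 = u2 := uSeq_eq_smul_adSeq 2

lemma uSeq_three : uSeq 3 = u3 := uSeq_eq_smul_adSeq 3

lemma hankelMinor_uSeq_zero : hankelMinor (qq ^ 2) uSeq 0 = p0 := by
  rw [hankelMinor, uSeq_zero, uSeq_one, uSeq_two, p0]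

lemma hankelMinor_uSeq_one : hankelMinor (qq ^ 2) uSeq 1 = p1 := by
  rw [hankelMinor, uSeq_one, uSeq_two, uSeq_three, p1]

/-- In `U` the elements `p₀` and `p₁` q-commute with each other and with each of the
generators `u₀, u₁, u₂, u₃`. -/
theorem stmt5 :
    p0 * p1 = qq ^ (-4 : ℤ) • (p1 * p0) ∧
    p0 * u0 = qq ^ 2 • (u0 * p0) ∧
    p0 * u1 = u1 * p0 ∧
    p0 * u2 = qq ^ (-2 : ℤ) • (u2 * p0) ∧
    p0 * u3 = qq ^ (-4 : ℤ) • (u3 * p0) ∧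
    p1 * u0 = qq ^ 4 • (u0 * p1) ∧
    p1 * u1 = qq ^ 2 • (u1 * p1) ∧
    p1 * u2 = u2 * p1 ∧
    p1 * u3 = qq ^ (-2 : ℤ) • (u3 * p1) := by
  rw [← hankelMinor_uSeq_zero, ← hankelMinor_uSeq_one, ← uSeq_zero, ← uSeq_one, ← uSeq_two,
    ← uSeq_three]
  exact stmt5_general two_ne_zero qq_ne_zero qq_sq_add_inv_ne_zero
    qq_sq_add_one_add_inv_ne_zero serrePolynomial_E1_E2 serrePolynomial_E2_E1 _ 0
end
end
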